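/- Let N ≥ 2 be an integer and a ∈ (0,1) satisfy 1 + a^(2N−1) = N·(1+a)·a^(2N−2). Then 1 + a^(2N+1) > (N+1)·(1+a)·a^(2N). (Equivalently: if ∫_0^1 h_a(u)^(N−1) du = a^(2(N−1)), then ∫_0^1 h_a(u)^N du > a^(2N), by strict Lyapunov monotonicity of L^p means of the nondegenerate random variable h_a(U).) -/

import Mathlib

/-!
Collecting the powers of `a`, the inequality `(n + 1)(1 + a)a^(2n) ≤ 1 + a^(2n+1)` becomes
`(1 + n(1 + a)) (a²)^n ≤ 1`. In this form it is an equality at `n = 0`, and Bernoulli's inequality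
`1 + q s < (1 + p s)^(q/p)` for `0 < p < q` carries it from any positive exponent to every larger
one, where it becomes strict.
-/

theorem one_add_mul_lt_one_add_mul_rpow_div {s p q : ℝ} (hs : s ≠ 0) (hp : 0 < p) (hpq : p < q)
    (h : 0 ≤ 1 + p * s) : 1 + q * s < (1 + p * s) ^ (q / p) := by
  have bernoulli : 1 + q / p * (p * s) < (1 + p * s) ^ (q / p) :=
    one_add_mul_self_lt_rpow_one_add (by linarith) (mul_ne_zero hp.ne' hs) ((one_lt_div hp).2 hpq)
  rwa [← mul_assoc, div_mul_cancel₀ q hp.ne'] at bernoulli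

theorem one_add_mul_mul_rpow_lt_one_of_le_one {s x p q : ℝ} (hs : s ≠ 0) (hx : 0 ≤ x) (hp : 0 < p)
    (hpq : p < q) (h : (1 + p * s) * x ^ p ≤ 1) : (1 + q * s) * x ^ q < 1 := by
  have hq : 0 < q := hp.trans hpq
  rcases hx.eq_or_lt with rfl | hx_pos
  · simp [Real.zero_rpow hq.ne']
  rcases le_or_gt (1 + q * s) 0 with hqs | hqs
  · exact (mul_nonpos_of_nonpos_of_nonneg hqs (by positivity)).trans_lt one_pos
  have hps : 0 ≤ 1 + p * s := by
    have weighted_mean : q * (1 + p * s) = (q - p) + p * (1 + q * s) := by ring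
    exact (mul_nonneg_iff_of_pos_left hq).1 <| weighted_mean ▸
      add_nonneg (sub_nonneg.2 hpq.le) (mul_pos hp hqs).le
  calc (1 + q * s) * x ^ q
      < (1 + p * s) ^ (q / p) * x ^ q := by
        gcongr
        exact one_add_mul_lt_one_add_mul_rpow_div hs hp hpq hps
    _ = ((1 + p * s) * x ^ p) ^ (q / p) := by
        rw [Real.mul_rpow hps (by positivity), ← Real.rpow_mul hx, mul_div_cancel₀ q hp.ne']
    _ ≤ 1 := Real.rpow_le_one (by positivity) h (by positivity)

theorem one_add_pow_sub_mul_pow {R : Type*} [CommRing R] (a : R) (n : ℕ) :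
    1 + a ^ (2 * n + 1) - (n + 1) * (1 + a) * a ^ (2 * n) =
      1 - (1 + n * (1 + a)) * (a ^ 2) ^ n := by
  ring

theorem stmt_8_general {m k : ℕ} (hm : 0 < m) (hmk : m < k) {a : ℝ} (ha : a ≠ -1)
    (h : ((m : ℝ) + 1) * (1 + a) * a ^ (2 * m) ≤ 1 + a ^ (2 * m + 1)) :
    ((k : ℝ) + 1) * (1 + a) * a ^ (2 * k) < 1 + a ^ (2 * k + 1) := by
  have hs : 1 + a ≠ 0 := fun h0 ↦ ha (by linarith)
  rw [← sub_nonneg, one_add_pow_sub_mul_pow, sub_nonneg, ← Real.rpow_natCast] at h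
  rw [← sub_pos, one_add_pow_sub_mul_pow, sub_pos, ← Real.rpow_natCast]
  exact one_add_mul_mul_rpow_lt_one_of_le_one hs (sq_nonneg a) (Nat.cast_pos.2 hm)
    (Nat.cast_lt.2 hmk) h

/-- Strict Lyapunov monotonicity step: if `a ∈ (0,1)` satisfies the zero-cost
two-draw equilibrium condition `1 + a^(2N−1) = N·(1+a)·a^(2N−2)`, then
`1 + a^(2N+1) > (N+1)·(1+a)·a^(2N)`. -/
theorem stmt_8 (N : ℕ) (hN : 2 ≤ N)
    (a : ℝ) (ha : a ∈ Set.Ioo (0:ℝ) 1)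
    (heq : 1 + a ^ (2 * N - 1) = (N : ℝ) * (1 + a) * a ^ (2 * N - 2)) :
    1 + a ^ (2 * N + 1) > ((N : ℝ) + 1) * (1 + a) * a ^ (2 * N) := by
  obtain ⟨m, rfl⟩ := Nat.exists_eq_add_of_le' (one_le_two.trans hN)
  exact stmt_8_general (by lia) m.lt_succ_self (by linarith [ha.1]) (m.cast_succ (R := ℝ) ▸ heq.ge)
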